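/- Let α, λ be real numbers with α > 0 and λ > 0. Every complex root of the polynomial p(s) = s³ + (α + λ)s² + αλ·s + 2α has negative real part if and only if λ(λ + α) > 2. Consequently, the equilibria (±√α, 0, 1) of the Shimizu–Morioka system are linearly stable exactly when λ(λ + α) > 2. -/

import Mathlib

/-!
A monic real cubic factors over `ℝ` as `(X² + pX + q)(X + r)`, and it is stable exactly when both
factors are, that is when `p, q, r > 0`. Expanding the product into `X³ + bX² + cX + d` gives
`b = p + r`, `d = qr` and `bc - d = p(q + rb)`, which turns positivity of `p, q, r` into the
Routh–Hurwitz conditions `b > 0`, `d > 0`, `d < bc`. For the Shimizu–Morioka polynomial the last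
of these reads `2α < (α + λ)αλ`.
-/

open Polynomial

/-- The notion of a Hurwitz (stable) real polynomial: all its complex roots lie in the open left
half-plane. Nonzero constants qualify vacuously, and the zero polynomial does not qualify. -/
def IsHurwitz (f : ℝ[X]) : Prop :=
  ∀ z : ℂ, aeval z f = 0 → z.re < 0

theorem isHurwitz_mul_iff {f g : ℝ[X]} : IsHurwitz (f * g) ↔ IsHurwitz f ∧ IsHurwitz g := by
  simp only [IsHurwitz, map_mul, mul_eq_zero, or_imp, forall_and]

theorem isHurwitz_X_add_C_iff {r : ℝ} : IsHurwitz (X + C r) ↔ 0 < r := by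
  simp [IsHurwitz, add_eq_zero_iff_eq_neg]

theorem aeval_quadratic_eq_zero_iff {p q : ℝ} {z : ℂ} :
    aeval z (X ^ 2 + C p * X + C q) = 0 ↔
      z.re ^ 2 - z.im ^ 2 + p * z.re + q = 0 ∧ (z.im = 0 ∨ 2 * z.re + p = 0) := by
  have im_factor : 2 * z.re * z.im + p * z.im = z.im * (2 * z.re + p) := by ring
  rw [← mul_eq_zero, ← im_factor]
  simp [Complex.ext_iff, sq, two_mul, add_mul, mul_comm z.im]

theorem isHurwitz_quadratic_iff {p q : ℝ} :
    IsHurwitz (X ^ 2 + C p * X + C q) ↔ 0 < p ∧ 0 < q := by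
  constructor
  · intro hf
    obtain ⟨z, hz⟩ : ∃ z : ℂ, aeval z (X ^ 2 + C p * X + C q) = 0 :=
      IsAlgClosed.exists_aeval_eq_zero ℂ _ <| by
        rw [degree_eq_natDegree (isMonicOfDegree_add_add_two p q).ne_zero,
          (isMonicOfDegree_add_add_two p q).natDegree_eq]
        norm_num
    -- By Vieta, the other root is `-p - z`.
    have hz' : aeval (-p - z) (X ^ 2 + C p * X + C q) = 0 := by
      rw [← hz]
      simp only [map_add, map_mul, map_pow, aeval_X, aeval_C, Complex.coe_algebraMap]
      ring
    have re_neg : z.re < 0 := hf z hz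
    have re_neg' : -p - z.re < 0 := by simpa using hf _ hz'
    refine ⟨by linarith, ?_⟩
    obtain ⟨re_eq, im_zero | re_eq_neg_half⟩ := aeval_quadratic_eq_zero_iff.1 hz
    · have q_eq : q = -z.re * (z.re + p) := by
        rw [im_zero] at re_eq
        linear_combination re_eq
      rw [q_eq]
      exact mul_pos (by linarith) (by linarith)
    · have q_eq : q = z.re ^ 2 + z.im ^ 2 := by
        linear_combination re_eq - z.re * re_eq_neg_half
      rw [q_eq]
      exact add_pos_of_pos_of_nonneg (sq_pos_of_neg re_neg) (sq_nonneg _)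
  · rintro ⟨hp, hq⟩ z hz
    by_contra! re_nonneg
    obtain ⟨re_eq, im_zero | re_eq_neg_half⟩ := aeval_quadratic_eq_zero_iff.1 hz
    · rw [im_zero] at re_eq
      have : 0 < z.re ^ 2 + p * z.re + q := by positivity
      linarith
    · linarith

theorem exists_cubic_eq_quadratic_mul_linear (b c d : ℝ) :
    ∃ p q r : ℝ, X ^ 3 + C b * X ^ 2 + C c * X + C d = (X ^ 2 + C p * X + C q) * (X + C r) := by
  have monic : IsMonicOfDegree (X ^ 3 + C b * X ^ 2 + C c * X + C d) (1 + 2) := by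
    constructor
    · compute_degree!
    · monicity!
  obtain ⟨f, g, hf, hg, eq_mul⟩ := monic.eq_isMonicOfDegree_two_mul_isMonicOfDegree
  obtain ⟨p, q, rfl⟩ := isMonicOfDegree_two_iff.1 hf
  obtain ⟨r, rfl⟩ := isMonicOfDegree_one_iff.1 hg
  exact ⟨p, q, r, eq_mul⟩

theorem quadratic_mul_linear_eq_cubic {R : Type*} [CommRing R] (p q r : R) :
    (X ^ 2 + C p * X + C q) * (X + C r) =
      X ^ 3 + C (p + r) * X ^ 2 + C (q + p * r) * X + C (q * r) := by
  simp only [map_add, map_mul]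
  ring

theorem cubic_eq_cubic_iff {R : Type*} [Semiring R] {b c d b' c' d' : R} :
    X ^ 3 + C b * X ^ 2 + C c * X + C d = X ^ 3 + C b' * X ^ 2 + C c' * X + C d' ↔
      b = b' ∧ c = c' ∧ d = d' := by
  simpa [Cubic.toPoly] using Cubic.toPoly_injective ⟨1, b, c, d⟩ ⟨1, b', c', d'⟩

theorem pos_coeffs_iff_routhHurwitz {R : Type*} [CommRing R] [LinearOrder R]
    [IsStrictOrderedRing R] {p q r : R} :
    (0 < p ∧ 0 < q) ∧ 0 < r ↔
      0 < p + r ∧ 0 < q * r ∧ q * r < (p + r) * (q + p * r) := by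
  have gap : (p + r) * (q + p * r) - q * r = p * (q + r * (p + r)) := by ring
  rw [← sub_pos (b := q * r), gap]
  constructor
  · rintro ⟨⟨hp, hq⟩, hr⟩
    exact ⟨by positivity, by positivity, by positivity⟩
  · rintro ⟨hb, hd, hgap⟩
    rcases mul_pos_iff.1 hd with ⟨hq, hr⟩ | ⟨hq, hr⟩
    · have cofactor_pos : 0 < q + r * (p + r) := by positivity
      exact ⟨⟨pos_of_mul_pos_left hgap cofactor_pos.le, hq⟩, hr⟩
    · have hp : 0 < p := by linarith
      have cofactor_neg : q + r * (p + r) < 0 := add_neg hq (mul_neg_of_neg_of_pos hr hb)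
      exact absurd hgap (mul_neg_of_pos_of_neg hp cofactor_neg).not_gt

theorem isHurwitz_cubic_iff {b c d : ℝ} :
    IsHurwitz (X ^ 3 + C b * X ^ 2 + C c * X + C d) ↔ 0 < b ∧ 0 < d ∧ d < b * c := by
  obtain ⟨p, q, r, eq_mul⟩ := exists_cubic_eq_quadratic_mul_linear b c d
  obtain ⟨rfl, rfl, rfl⟩ :=
    cubic_eq_cubic_iff.1 (eq_mul.trans (quadratic_mul_linear_eq_cubic p q r))
  rw [eq_mul, isHurwitz_mul_iff, isHurwitz_quadratic_iff, isHurwitz_X_add_C_iff,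
    pos_coeffs_iff_routhHurwitz]

/-- Routh–Hurwitz criterion for the Shimizu–Morioka secondary equilibria: for `α > 0`,
`λ > 0`, every complex root of `p(s) = s³ + (α+λ)s² + αλ·s + 2α` has negative real
part if and only if `λ(λ+α) > 2`; i.e., the equilibria `(±√α, 0, 1)` are linearly
stable exactly when `λ(λ+α) > 2`. -/
theorem shimizuMorioka_secondary_stability (a l : ℝ) (ha : 0 < a) (hl : 0 < l) :
    (∀ s : ℂ,
        s ^ 3 + ((a : ℂ) + (l : ℂ)) * s ^ 2 + (a : ℂ) * (l : ℂ) * s + 2 * (a : ℂ) = 0 →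
        s.re < 0) ↔
      2 < l * (l + a) := by
  calc
    _ ↔ IsHurwitz (X ^ 3 + C (a + l) * X ^ 2 + C (a * l) * X + C (2 * a)) := by
      simp [IsHurwitz]
    _ ↔ 0 < a + l ∧ 0 < 2 * a ∧ 2 * a < (a + l) * (a * l) := isHurwitz_cubic_iff
    _ ↔ 2 * a < (a + l) * (a * l) := by
      simp only [add_pos ha hl, mul_pos two_pos ha, true_and]
    _ ↔ 2 * a < l * (l + a) * a := by
      rw [show (a + l) * (a * l) = l * (l + a) * a by ring]
    _ ↔ 2 < l * (l + a) := mul_lt_mul_iff_left₀ ha
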